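/- Let S be a nonempty compact subset of EuclideanSpace ℝ (Fin 3) and let q ∈ convexHull ℝ S satisfy Metric.infDist q ((convexHull ℝ S)ᶜ) ≤ Metric.infDist q S. Then Metric.infDist q S ≤ Real.sqrt (R_v(S)² + H_b(S)²). -/

import Mathlib

open Metric MeasureTheory

noncomputable def Hb (S : Set (EuclideanSpace ℝ (Fin 3))) : ℝ :=
  Metric.hausdorffDist (frontier S) (frontier (convexHull ℝ S))

noncomputable def Rv (S : Set (EuclideanSpace ℝ (Fin 3))) : ℝ :=
  (3 * ((volume (convexHull ℝ S)).toReal - (volume S).toReal) / (4 * Real.pi)) ^ ((1 : ℝ) / 3)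

/-!
The ball around `q` of radius `r = infDist q (convexHull ℝ S)ᶜ` lies in the convex hull and misses
`S`, so comparing volumes bounds `r`. It touches the frontier of the hull at a point `y`, and the
tangent hyperplane there supports the hull: no point `p` of the hull lies strictly beyond it. So the
angle at `y` between `q` and `p` is not acute and `dist q p ^ 2 ≤ r ^ 2 + dist y p ^ 2`; let `p`
approach the part of `frontier S` nearest to `y`.
-/

open Module Bornology Set
open scoped RealInnerProductSpace

section ObtuseAngle

variable {E : Type*} [NormedAddCommGroup E] [InnerProductSpace ℝ E]

theorem exists_pos_norm_sub_smul_lt {x v : E} (h : 0 < ⟪x, v⟫) :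
    ∃ t : ℝ, 0 < t ∧ ‖x - t • v‖ < ‖x‖ := by
  have hv : 0 < ‖v‖ := norm_pos_iff.2 <| by
    rintro rfl
    simp at h
  -- The minimizer of `t ↦ ‖x - t • v‖`.
  refine ⟨⟪x, v⟫ / ‖v‖ ^ 2, by positivity, ?_⟩
  have norm_sq_eq : ‖x - (⟪x, v⟫ / ‖v‖ ^ 2) • v‖ ^ 2 = ‖x‖ ^ 2 - ⟪x, v⟫ ^ 2 / ‖v‖ ^ 2 := by
    rw [norm_sub_sq_real, real_inner_smul_right, norm_smul, mul_pow, Real.norm_eq_abs, sq_abs]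
    field
  refine lt_of_pow_lt_pow_left₀ 2 (norm_nonneg x) ?_
  rw [norm_sq_eq]
  exact sub_lt_self _ (by positivity)

variable {K A : Set E} {q y p : E}

theorem inner_sub_sub_nonpos_of_ball_subset (hK : Convex ℝ K) (hball : ball q (dist q y) ⊆ K)
    (hy : y ∉ interior K) (hp : p ∈ closure K) : ⟪y - q, p - y⟫ ≤ 0 := by
  by_contra! hpos
  obtain ⟨t, ht, hlt⟩ := exists_pos_norm_sub_smul_lt hpos
  have mem_interior : y - t • (p - y) ∈ interior K := by
    refine interior_maximal hball isOpen_ball ?_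
    rwa [mem_ball, dist_eq_norm, dist_eq_norm', sub_right_comm]
  have mem_openSegment : y ∈ openSegment ℝ (y - t • (p - y)) p := by
    refine ⟨1 / (1 + t), t / (1 + t), by positivity, by positivity, by field, ?_⟩
    match_scalars <;> field
  exact hy (hK.openSegment_interior_closure_subset_interior mem_interior hp mem_openSegment)

theorem dist_sq_le_dist_sq_add_dist_sq_of_ball_subset (hK : Convex ℝ K)
    (hball : ball q (dist q y) ⊆ K) (hy : y ∉ interior K) (hp : p ∈ closure K) :
    dist q p ^ 2 ≤ dist q y ^ 2 + dist y p ^ 2 := by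
  have hinner := inner_sub_sub_nonpos_of_ball_subset hK hball hy hp
  calc dist q p ^ 2 = ‖(y - q) + (p - y)‖ ^ 2 := by
        rw [dist_eq_norm', add_comm, sub_add_sub_cancel]
    _ = dist q y ^ 2 + 2 * ⟪y - q, p - y⟫ + dist y p ^ 2 := by
        rw [norm_add_sq_real, dist_eq_norm', dist_eq_norm']
    _ ≤ dist q y ^ 2 + dist y p ^ 2 := by linarith

theorem infDist_sq_le_dist_sq_add_infDist_sq_of_ball_subset (hK : Convex ℝ K)
    (hball : ball q (dist q y) ⊆ K) (hy : y ∉ interior K) (hA : A ⊆ closure K)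
    (hne : A.Nonempty) : infDist q A ^ 2 ≤ dist q y ^ 2 + infDist y A ^ 2 := by
  have sqrt_le : √(infDist q A ^ 2 - dist q y ^ 2) ≤ infDist y A := by
    refine (le_infDist hne).2 fun a ha => Real.sqrt_le_iff.2 ⟨dist_nonneg, ?_⟩
    have hqa : infDist q A ^ 2 ≤ dist q a ^ 2 :=
      pow_le_pow_left₀ infDist_nonneg (infDist_le_dist_of_mem ha) 2
    linarith [dist_sq_le_dist_sq_add_dist_sq_of_ball_subset hK hball hy (hA ha)]
  linarith [(Real.sqrt_le_iff.1 sqrt_le).2]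

end ObtuseAngle

section Frontier

variable {E : Type*} [NormedAddCommGroup E] [NormedSpace ℝ E] [Nontrivial E] {S K : Set E}

theorem ne_univ_of_isBounded (hS : IsBounded S) : S ≠ univ := by
  rintro rfl
  exact NormedSpace.unbounded_univ ℝ E hS

theorem nonempty_frontier_of_isBounded (hS : IsBounded S) (hne : S.Nonempty) :
    (frontier S).Nonempty :=
  nonempty_frontier_iff.2 ⟨hne, ne_univ_of_isBounded hS⟩

theorem infDist_frontier_le_hausdorffDist (hS : IsBounded S) (hne : S.Nonempty)
    (hK : IsBounded K) {y : E} (hy : y ∈ frontier K) :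
    infDist y (frontier S) ≤ hausdorffDist (frontier S) (frontier K) := by
  rw [hausdorffDist_comm]
  exact infDist_le_hausdorffDist_of_mem hy <|
    hausdorffEDist_ne_top_of_nonempty_of_bounded ⟨y, hy⟩ (nonempty_frontier_of_isBounded hS hne)
      (hK.closure.subset frontier_subset_closure) (hS.closure.subset frontier_subset_closure)

end Frontier

section BallRadius

variable {E : Type*} [NormedAddCommGroup E] [NormedSpace ℝ E] [MeasurableSpace E]

/-- The radius of a ball of `μ`-measure `v`, for `μ` a Haar measure on a nontrivial
finite-dimensional space and `0 ≤ v`; it extends `Rv` to such spaces. -/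
noncomputable def ballRadius (μ : Measure E) (v : ℝ) : ℝ :=
  (v / μ.real (ball 0 1)) ^ (finrank ℝ E : ℝ)⁻¹

theorem ballRadius_euclideanSpace_fin_three (v : ℝ) :
    ballRadius (volume : Measure (EuclideanSpace ℝ (Fin 3))) v =
      (3 * v / (4 * Real.pi)) ^ ((1 : ℝ) / 3) := by
  have volume_unitBall :
      volume.real (ball (0 : EuclideanSpace ℝ (Fin 3)) 1) = Real.pi * 4 / 3 := by
    rw [measureReal_def, EuclideanSpace.volume_ball_fin_three, ENNReal.ofReal_one, one_pow,
      one_mul, ENNReal.toReal_ofReal (by positivity)]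
  rw [ballRadius, volume_unitBall, finrank_euclideanSpace_fin, Nat.cast_ofNat, one_div]
  congr 1
  field

variable [BorelSpace E] [FiniteDimensional ℝ E] [Nontrivial E]
  (μ : Measure E) [μ.IsAddHaarMeasure]

theorem le_ballRadius_of_measureReal_ball_le {q : E} {r v : ℝ} (hr : 0 ≤ r)
    (h : μ.real (ball q r) ≤ v) : r ≤ ballRadius μ v := by
  have unitBall_pos : 0 < μ.real (ball (0 : E) 1) :=
    ENNReal.toReal_pos (measure_ball_pos μ 0 one_pos).ne' measure_ball_lt_top.ne
  have measureReal_ball : μ.real (ball q r) = r ^ finrank ℝ E * μ.real (ball (0 : E) 1) := by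
    rw [measureReal_def, Measure.addHaar_ball μ q hr, ENNReal.toReal_mul,
      ENNReal.toReal_ofReal (by positivity), measureReal_def]
  have pow_le : r ^ finrank ℝ E ≤ v / μ.real (ball (0 : E) 1) := by
    rwa [le_div_iff₀ unitBall_pos, ← measureReal_ball]
  calc r = (r ^ finrank ℝ E) ^ (finrank ℝ E : ℝ)⁻¹ :=
        (Real.pow_rpow_inv_natCast hr finrank_pos.ne').symm
    _ ≤ ballRadius μ v := Real.rpow_le_rpow (by positivity) pow_le (by positivity)

theorem infDist_compl_le_ballRadius {S K : Set E} {q : E} (hSK : S ⊆ K) (hK : μ K ≠ ⊤)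
    (hle : infDist q Kᶜ ≤ infDist q S) :
    infDist q Kᶜ ≤ ballRadius μ (μ.real K - μ.real S) := by
  refine le_ballRadius_of_measureReal_ball_le (q := q) μ infDist_nonneg (le_sub_iff_add_le.2 ?_)
  have hdisj : Disjoint (ball q (infDist q Kᶜ)) S :=
    disjoint_ball_infDist.mono_left (ball_subset_ball hle)
  calc μ.real (ball q (infDist q Kᶜ)) + μ.real S
      = μ.real (ball q (infDist q Kᶜ) ∪ S) :=
        (measureReal_union' hdisj measurableSet_ball measure_ball_lt_top.ne
          (measure_ne_top_of_subset hSK hK)).symm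
    _ ≤ μ.real K := measureReal_mono (union_subset ball_infDist_compl_subset hSK) hK

end BallRadius

theorem infDist_le_sqrt_of_obstructed_general {E : Type*} [NormedAddCommGroup E]
    [InnerProductSpace ℝ E] [FiniteDimensional ℝ E] [Nontrivial E] [MeasurableSpace E]
    [BorelSpace E] (μ : Measure E) [μ.IsAddHaarMeasure] {S : Set E} (hS : IsBounded S) {q : E}
    (hq : q ∈ convexHull ℝ S) (hle : infDist q (convexHull ℝ S)ᶜ ≤ infDist q S) :
    infDist q S ≤ √(ballRadius μ (μ.real (convexHull ℝ S) - μ.real S) ^ 2 +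
      hausdorffDist (frontier S) (frontier (convexHull ℝ S)) ^ 2) := by
  have hne : S.Nonempty := convexHull_nonempty_iff.1 ⟨q, hq⟩
  have hhull : IsBounded (convexHull ℝ S) := isBounded_convexHull.2 hS
  have hfr : (frontier S).Nonempty := nonempty_frontier_of_isBounded hS hne
  obtain ⟨y, hy, hqy⟩ := exists_mem_frontier_infDist_compl_eq_dist hq (ne_univ_of_isBounded hhull)
  have hball : ball q (dist q y) ⊆ convexHull ℝ S := hqy ▸ ball_infDist_compl_subset
  have hsub : frontier S ⊆ closure (convexHull ℝ S) :=
    frontier_subset_closure.trans (closure_mono (subset_convexHull ℝ S))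
  refine Real.le_sqrt_of_sq_le ?_
  calc infDist q S ^ 2 ≤ infDist q (frontier S) ^ 2 := by
        rw [← infDist_closure (s := S)]
        exact pow_le_pow_left₀ infDist_nonneg
          (infDist_le_infDist_of_subset frontier_subset_closure hfr) 2
    _ ≤ dist q y ^ 2 + infDist y (frontier S) ^ 2 :=
        infDist_sq_le_dist_sq_add_infDist_sq_of_ball_subset (convex_convexHull ℝ S) hball hy.2
          hsub hfr
    _ ≤ _ := by
        gcongr
        · exact hqy ▸ infDist_compl_le_ballRadius μ (subset_convexHull ℝ S)
            hhull.measure_lt_top.ne hle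
        · exact infDist_nonneg
        · exact infDist_frontier_le_hausdorffDist hS hne hhull hy

theorem infDist_le_sqrt_of_obstructed (S : Set (EuclideanSpace ℝ (Fin 3)))
    (hne : S.Nonempty) (hcomp : IsCompact S)
    (q : EuclideanSpace ℝ (Fin 3)) (hq : q ∈ convexHull ℝ S)
    (hle : Metric.infDist q ((convexHull ℝ S)ᶜ) ≤ Metric.infDist q S) :
    Metric.infDist q S ≤ Real.sqrt (Rv S ^ 2 + Hb S ^ 2) := by
  rw [Rv, Hb, ← ballRadius_euclideanSpace_fin_three]
  exact infDist_le_sqrt_of_obstructed_general volume hcomp.isBounded hq hle
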